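/- Let f : ℝ → ℂ be 2π-periodic of class C² and let ρ be a filter function. For a discrete function φ define G_h^p(φ)_i = ((f(α_·)φ)^p)_i − f(α_i)(φ^p)_i. Then there exists a constant c > 0, depending only on f and ρ and not on N or φ, such that for every even integer N ≥ 2, every discrete function φ, and every k ∈ {0, 1}: ‖D_h^k(G_h^p(φ))‖_{l²} ≤ c ‖φ‖_{l²} and ‖G_h^p(S_h^k φ)‖_{l²} ≤ c ‖φ‖_{l²}. -/

import Mathlib

open scoped BigOperators
open Finset

noncomputable section

/-- Grid spacing `h = 2π/N`. -/
def hgrid (N : ℤ) : ℝ := 2 * Real.pi / N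

/-- Grid points `α_j = j h`. -/
def gridPt (N : ℤ) (j : ℤ) : ℝ := j * hgrid N

/-- Index set `{-N/2+1, …, N/2}`. -/
def idxs (N : ℤ) : Finset ℤ := Finset.Icc (-(N / 2) + 1) (N / 2)

/-- Discrete Fourier coefficient `f̂_k`. -/
def dft (N : ℤ) (f : ℤ → ℂ) (k : ℤ) : ℂ :=
  (N : ℂ)⁻¹ * ∑ j ∈ idxs N, f j * Complex.exp (-(Complex.I * (k : ℂ) * (gridPt N j : ℂ)))

/-- Reconstruction of a discrete function from Fourier coefficients. -/
def idft (N : ℤ) (c : ℤ → ℂ) (j : ℤ) : ℂ :=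
  ∑ k ∈ idxs N, c k * Complex.exp (Complex.I * (k : ℂ) * (gridPt N j : ℂ))

/-- The pseudo-spectral derivative `S_h`. -/
def Sh (N : ℤ) (f : ℤ → ℂ) : ℤ → ℂ :=
  idft N fun k => if k = N / 2 then 0 else Complex.I * (k : ℂ) * dft N f k

/-- The pseudo-spectral antiderivative `S_h⁻¹`. -/
def Shinv (N : ℤ) (f : ℤ → ℂ) : ℤ → ℂ :=
  idft N fun k => if k = 0 then 0 else dft N f k / (Complex.I * (k : ℂ))

/-- The filtered discrete function `f^p`. -/
def filterP (N : ℤ) (ρ : ℝ → ℝ) (f : ℤ → ℂ) : ℤ → ℂ :=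
  idft N fun k => (ρ (gridPt N k) : ℂ) * dft N f k

/-- The filtered derivative `D_h`. -/
def Dh (N : ℤ) (ρ : ℝ → ℝ) (f : ℤ → ℂ) : ℤ → ℂ :=
  idft N fun k => Complex.I * (k : ℂ) * (ρ (gridPt N k) : ℂ) * dft N f k

/-- Discrete `l²` norm. -/
def l2norm (N : ℤ) (f : ℤ → ℂ) : ℝ :=
  Real.sqrt (hgrid N * ∑ j ∈ idxs N, ‖f j‖ ^ 2)

/-- Discrete Hilbert transform `H_h`. -/
def Hh (N : ℤ) (f : ℤ → ℂ) (i : ℤ) : ℂ :=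
  ((hgrid N / Real.pi : ℝ) : ℂ) *
    ∑ j ∈ (idxs N).filter (fun j => Odd (j - i)),
      f j * (Real.cot ((gridPt N i - gridPt N j) / 2) : ℂ)

/-- Discrete inner product `(f,g)_h`. -/
def dip (N : ℤ) (f g : ℤ → ℂ) : ℂ :=
  (hgrid N : ℂ) * ∑ j ∈ idxs N, (starRingEnd ℂ) (f j) * g j

/-- Discrete mean `⟨f⟩_h`. -/
def dmean (N : ℤ) (f : ℤ → ℂ) : ℂ :=
  (N : ℂ)⁻¹ * ∑ j ∈ idxs N, f j

/-- The discrete function of samples of a periodic function. -/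
def samples (N : ℤ) (f : ℝ → ℂ) : ℤ → ℂ := fun j => f (gridPt N j)

/-- Fourier coefficient of a `2π`-periodic function. -/
def fourierCoeffP (f : ℝ → ℂ) (k : ℤ) : ℂ :=
  ((2 * Real.pi)⁻¹ : ℝ) * ∫ α in (-Real.pi)..Real.pi, f α * Complex.exp (-(Complex.I * (k : ℂ) * (α : ℂ)))

/-- Sobolev norm `‖f‖_s`. -/
def sobolevNorm (s : ℕ) (f : ℝ → ℂ) : ℝ :=
  Real.sqrt (∑' k : ℤ, (1 + (k : ℝ) ^ 2) ^ s * ‖fourierCoeffP f k‖ ^ 2)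

/-- A filter (cutoff) function for numerical filtering. -/
structure IsFilter (ρ : ℝ → ℝ) : Prop where
  even : ∀ x, ρ (-x) = ρ x
  nonneg : ∀ x, 0 ≤ ρ x
  smooth : ∃ r : ℕ, 2 < r ∧ ContDiff ℝ r ρ
  zero_at_pi : ρ Real.pi = 0
  zero_at_neg_pi : ρ (-Real.pi) = 0
  deriv_zero_at_pi : deriv ρ Real.pi = 0
  deriv_zero_at_neg_pi : deriv ρ (-Real.pi) = 0
  one_near_zero : ∃ μ : ℝ, 0 < μ ∧ μ < 1 ∧ ∀ x : ℝ, |x| ≤ μ * Real.pi → ρ x = 1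

/-- The commutator `G_h^p(φ)` of the filtering operator with multiplication by the
samples of a smooth function `f`. -/
def Ghp (N : ℤ) (ρ : ℝ → ℝ) (f : ℝ → ℂ) (φ : ℤ → ℂ) (i : ℤ) : ℂ :=
  filterP N ρ (fun j => f (gridPt N j) * φ j) i - f (gridPt N i) * filterP N ρ φ i

/-- The grid exponential `e^{inh}`. -/
def mode (N n : ℤ) : ℂ := Complex.exp (Complex.I * (n : ℂ) * (hgrid N : ℂ))

lemma mode_add (N m n : ℤ) : mode N (m + n) = mode N m * mode N n := by
  simp only [mode, ← Complex.exp_add]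
  congr 1; push_cast; ring

lemma mode_zero (N : ℤ) : mode N 0 = 1 := by simp [mode]

lemma conj_mode (N n : ℤ) : (starRingEnd ℂ) (mode N n) = mode N (-n) := by
  simp [mode, ← Complex.exp_conj]

lemma norm_mode (N n : ℤ) : ‖mode N n‖ = 1 := by
  rw [mode, show Complex.I * (n : ℂ) * (hgrid N : ℂ) = ((n * hgrid N : ℝ) : ℂ) * Complex.I by
    push_cast; ring]
  exact Complex.norm_exp_ofReal_mul_I _

lemma mode_eq_one_iff {N : ℤ} (hN : N ≠ 0) (n : ℤ) : mode N n = 1 ↔ N ∣ n := by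
  have hNc : (N : ℂ) ≠ 0 := by exact_mod_cast hN
  have hpi : (2 * (Real.pi : ℂ) * Complex.I) ≠ 0 := Complex.two_pi_I_ne_zero
  rw [mode, Complex.exp_eq_one_iff]
  refine exists_congr fun m => ?_
  have : Complex.I * (n : ℂ) * (hgrid N : ℂ) = (n / N : ℂ) * (2 * Real.pi * Complex.I) := by
    simp only [hgrid]; push_cast; ring
  rw [this, mul_left_inj' hpi, div_eq_iff hNc, mul_comm N m]
  norm_cast

lemma mode_mul_period {N : ℤ} (hN : N ≠ 0) (n : ℤ) : mode N (n * N) = 1 :=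
  (mode_eq_one_iff hN _).2 (dvd_mul_left _ _)

lemma dft_eq_sum_mode (N : ℤ) (f : ℤ → ℂ) (k : ℤ) :
    dft N f k = (N : ℂ)⁻¹ * ∑ j ∈ idxs N, f j * mode N (-(k * j)) := by
  simp only [dft, mode, gridPt]
  congr 1
  refine Finset.sum_congr rfl fun j _ => ?_
  congr 2; push_cast; ring

lemma idft_eq_sum_mode (N : ℤ) (c : ℤ → ℂ) (j : ℤ) :
    idft N c j = ∑ k ∈ idxs N, c k * mode N (k * j) := by
  simp only [idft, mode, gridPt]
  refine Finset.sum_congr rfl fun k _ => ?_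
  congr 2; push_cast; ring

/-- Sums of periodic functions over a full period are invariant under a unit shift. -/
lemma sum_idxs_add_one {N : ℤ} (hN : 2 ≤ N) (hE : Even N) {g : ℤ → ℂ}
    (hg : Function.Periodic g N) : ∑ j ∈ idxs N, g (j + 1) = ∑ j ∈ idxs N, g j := by
  have hN2 := Int.even_iff.1 hE
  have himg : (idxs N).image (fun j => j + 1) = Finset.Icc (-(N / 2) + 2) (N / 2 + 1) := by
    ext x
    simp only [idxs, Finset.mem_image, Finset.mem_Icc]
    constructor
    · rintro ⟨y, hy, rfl⟩; omega
    · intro hx; exact ⟨x - 1, by omega, by omega⟩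
  have hshift : ∑ j ∈ idxs N, g (j + 1) = ∑ j ∈ Finset.Icc (-(N / 2) + 2) (N / 2 + 1), g j := by
    rw [← himg, Finset.sum_image fun a _ b _ h => by simpa using h]
  have hleft : insert (-(N / 2) + 1) (Finset.Icc (-(N / 2) + 2) (N / 2 + 1))
      = insert (N / 2 + 1) (idxs N) := by
    ext x; simp only [idxs, Finset.mem_insert, Finset.mem_Icc]; omega
  have hsum : ∑ j ∈ insert (-(N / 2) + 1) (Finset.Icc (-(N / 2) + 2) (N / 2 + 1)), g j
      = ∑ j ∈ insert (N / 2 + 1) (idxs N), g j := by rw [hleft]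
  rw [Finset.sum_insert (by simp), Finset.sum_insert (by simp [idxs])] at hsum
  have hends : g (N / 2 + 1) = g (-(N / 2) + 1) := by
    rw [← hg (-(N / 2) + 1)]; congr 1; omega
  rw [hends] at hsum
  rw [hshift]
  exact add_left_cancel hsum

lemma sum_idxs_add {N : ℤ} (hN : 2 ≤ N) (hE : Even N) {g : ℤ → ℂ}
    (hg : Function.Periodic g N) (d : ℤ) : ∑ j ∈ idxs N, g (j + d) = ∑ j ∈ idxs N, g j := by
  have hstep : ∀ e : ℤ, ∑ j ∈ idxs N, g (j + (e + 1)) = ∑ j ∈ idxs N, g (j + e) := fun e => by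
    rw [← sum_idxs_add_one hN hE (g := fun j => g (j + e)) fun j => by
      simp only; rw [← hg (j + e)]; congr 1; ring]
    exact Finset.sum_congr rfl fun j _ => by congr 1; ring
  induction d using Int.induction_on with
  | zero => simp
  | succ n ih => rw [hstep, ih]
  | pred n ih => rw [← ih, ← hstep, sub_add_cancel]

lemma sum_mode_sub {N : ℤ} (hN : 2 ≤ N) (hE : Even N) {k l : ℤ} (hk : k ∈ idxs N)
    (hl : l ∈ idxs N) :
    ∑ j ∈ idxs N, mode N ((k - l) * j) = if k = l then (N : ℂ) else 0 := by
  have hN0 : N ≠ 0 := by omega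
  have hN2 := Int.even_iff.1 hE
  simp only [idxs, Finset.mem_Icc] at hk hl
  split_ifs with h
  · subst h
    have hcard : (N / 2 + 1 - (-(N / 2) + 1)).toNat = N.toNat := by omega
    simp only [sub_self, zero_mul, mode_zero, Finset.sum_const, idxs, Int.card_Icc, hcard,
      nsmul_eq_mul, mul_one]
    exact_mod_cast Int.toNat_of_nonneg (by omega : (0 : ℤ) ≤ N)
  · have hne : mode N (k - l) ≠ 1 := by
      rw [Ne, mode_eq_one_iff hN0]
      intro hd
      have := Int.eq_zero_of_abs_lt_dvd hd (by rw [abs_lt]; omega)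
      omega
    have hs := sum_idxs_add_one hN hE (g := fun j => mode N ((k - l) * j)) fun j => by
      simp only [mul_add, mode_add, mode_mul_period hN0, mul_one]
    simp only [mul_add, mode_add, mul_one, ← Finset.sum_mul] at hs
    by_contra h0
    exact hne (mul_left_cancel₀ h0 (by rw [hs, mul_one]))

/-- Parseval's identity for the inverse transform. -/
lemma sum_norm_sq_idft {N : ℤ} (hN : 2 ≤ N) (hE : Even N) (c : ℤ → ℂ) :
    ∑ j ∈ idxs N, ‖idft N c j‖ ^ 2 = N * ∑ k ∈ idxs N, ‖c k‖ ^ 2 := by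
  have hsq : ∀ z : ℂ, ((‖z‖ ^ 2 : ℝ) : ℂ) = z * (starRingEnd ℂ) z := fun z => by
    rw [Complex.mul_conj, Complex.normSq_eq_norm_sq]
  have hterm : ∀ j, ((‖idft N c j‖ ^ 2 : ℝ) : ℂ) = ∑ k ∈ idxs N, ∑ l ∈ idxs N,
      c k * (starRingEnd ℂ) (c l) * mode N ((k - l) * j) := fun j => by
    rw [hsq, idft_eq_sum_mode, map_sum, Finset.sum_mul_sum]
    refine Finset.sum_congr rfl fun k _ => Finset.sum_congr rfl fun l _ => ?_
    rw [map_mul, conj_mode, sub_mul, sub_eq_add_neg, mode_add]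
    ring
  apply Complex.ofReal_injective
  rw [Complex.ofReal_sum, Finset.sum_congr rfl fun j _ => hterm j, Finset.sum_comm]
  rw [Complex.ofReal_mul, Complex.ofReal_sum, Finset.mul_sum]
  refine Finset.sum_congr rfl fun k hk => ?_
  rw [Finset.sum_comm]
  simp_rw [← Finset.mul_sum]
  rw [Finset.sum_congr rfl fun l hl => by rw [sum_mode_sub hN hE hk hl]]
  simp only [mul_ite, mul_zero, Finset.sum_ite_eq, hk, if_true]
  rw [hsq]
  push_cast
  ring

/-- Parseval's identity for the forward transform. -/
lemma sum_norm_sq_dft {N : ℤ} (hN : 2 ≤ N) (hE : Even N) (f : ℤ → ℂ) :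
    N * ∑ k ∈ idxs N, ‖dft N f k‖ ^ 2 = ∑ j ∈ idxs N, ‖f j‖ ^ 2 := by
  have hNr : (N : ℝ) ≠ 0 := by exact_mod_cast (by omega : N ≠ 0)
  have hconj : ∀ k, ‖dft N f k‖ = (N : ℝ)⁻¹ * ‖idft N (fun j => (starRingEnd ℂ) (f j)) k‖ := by
    intro k
    have hNn : ‖(N : ℂ)⁻¹‖ = (N : ℝ)⁻¹ := by
      rw [norm_inv, Complex.norm_intCast, abs_of_nonneg (by exact_mod_cast (by omega : 0 ≤ N))]
    rw [dft_eq_sum_mode, norm_mul, hNn,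
      ← RCLike.norm_conj (∑ j ∈ idxs N, f j * mode N (-(k * j))), map_sum, idft_eq_sum_mode]
    congr 2
    refine Finset.sum_congr rfl fun j _ => ?_
    rw [map_mul, conj_mode, neg_neg, mul_comm k j]
  simp_rw [hconj, mul_pow, ← Finset.mul_sum, sum_norm_sq_idft hN hE, RCLike.norm_conj]
  field_simp

lemma idft_dft {N : ℤ} (hN : 2 ≤ N) (hE : Even N) (f : ℤ → ℂ) {j : ℤ} (hj : j ∈ idxs N) :
    idft N (dft N f) j = f j := by
  have hNc : (N : ℂ) ≠ 0 := by exact_mod_cast (by omega : N ≠ 0)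
  have hterm : ∀ k, dft N f k * mode N (k * j)
      = ∑ l ∈ idxs N, (N : ℂ)⁻¹ * f l * mode N ((j - l) * k) := fun k => by
    rw [dft_eq_sum_mode, Finset.mul_sum, Finset.sum_mul]
    refine Finset.sum_congr rfl fun l _ => ?_
    rw [show (j - l) * k = -(k * l) + k * j by ring, mode_add]
    ring
  rw [idft_eq_sum_mode, Finset.sum_congr rfl fun k _ => hterm k, Finset.sum_comm]
  simp_rw [← Finset.mul_sum]
  rw [Finset.sum_congr rfl fun l hl => by rw [sum_mode_sub hN hE hj hl]]
  simp only [mul_ite, mul_zero, Finset.sum_ite_eq, hj, if_true]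
  field_simp

lemma hgrid_pos {N : ℤ} (hN : 2 ≤ N) : 0 < hgrid N := by
  have : (0 : ℝ) < N := by exact_mod_cast (by omega : 0 < N)
  unfold hgrid; positivity

lemma abs_mul_hgrid_le {N : ℤ} (hN : 2 ≤ N) {k : ℤ} (hk : |k| ≤ N / 2) :
    |(k : ℝ)| * hgrid N ≤ Real.pi := by
  have hNr : (0 : ℝ) < N := by exact_mod_cast (by omega : 0 < N)
  have h2 : 2 * |(k : ℝ)| ≤ N := by exact_mod_cast (by omega : 2 * |k| ≤ N)
  unfold hgrid
  rw [mul_div_assoc', div_le_iff₀ hNr]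
  nlinarith [Real.pi_pos]

lemma abs_le_of_mem_idxs {N k : ℤ} (hk : k ∈ idxs N) : |k| ≤ N / 2 := by
  simp only [idxs, Finset.mem_Icc] at hk
  rw [abs_le]; omega

lemma gridPt_mem_Icc {N : ℤ} (hN : 2 ≤ N) {k : ℤ} (hk : |k| ≤ N / 2) :
    gridPt N k ∈ Set.Icc (-Real.pi) Real.pi := by
  rw [Set.mem_Icc, ← abs_le, gridPt, abs_mul, abs_of_pos (hgrid_pos hN)]
  exact abs_mul_hgrid_le hN hk

lemma l2norm_congr {N : ℤ} {f g : ℤ → ℂ} (h : ∀ j ∈ idxs N, f j = g j) :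
    l2norm N f = l2norm N g := by
  unfold l2norm
  rw [Finset.sum_congr rfl fun j hj => by rw [h j hj]]

lemma l2norm_nonneg (N : ℤ) (f : ℤ → ℂ) : 0 ≤ l2norm N f := Real.sqrt_nonneg _

lemma l2norm_eq_euclidean {N : ℤ} (hN : 2 ≤ N) (f : ℤ → ℂ) :
    l2norm N f = Real.sqrt (hgrid N) *
      ‖(WithLp.toLp 2 (fun j : idxs N => f j) : EuclideanSpace ℂ (idxs N))‖ := by
  rw [l2norm, Real.sqrt_mul (hgrid_pos hN).le, EuclideanSpace.norm_eq,
    ← Finset.sum_coe_sort (idxs N)]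

lemma l2norm_sum_le {N : ℤ} (hN : 2 ≤ N) (s : Finset ℤ) (g : ℤ → ℤ → ℂ) :
    l2norm N (fun j => ∑ d ∈ s, g d j) ≤ ∑ d ∈ s, l2norm N (g d) := by
  simp_rw [l2norm_eq_euclidean hN, ← Finset.mul_sum]
  refine mul_le_mul_of_nonneg_left ?_ (Real.sqrt_nonneg _)
  have : (WithLp.toLp 2 (fun j : idxs N => ∑ d ∈ s, g d j) : EuclideanSpace ℂ (idxs N))
      = ∑ d ∈ s, WithLp.toLp 2 (fun j : idxs N => g d j) := by
    rw [← WithLp.toLp_sum]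
    congr 1
    ext j
    simp
  rw [this]
  exact norm_sum_le _ _

lemma l2norm_mul_of_norm_eq {N : ℤ} {u : ℤ → ℂ} {a : ℝ} (ha : 0 ≤ a) (hu : ∀ j, ‖u j‖ = a)
    (f : ℤ → ℂ) : l2norm N (fun j => u j * f j) = a * l2norm N f := by
  simp only [l2norm, norm_mul, hu, mul_pow, ← Finset.mul_sum]
  rw [mul_left_comm, Real.sqrt_mul (sq_nonneg a), Real.sqrt_sq ha]

/-- A Fourier multiplier is bounded on `l²` by the supremum of its symbol. -/
lemma l2norm_idft_le {N : ℤ} (hN : 2 ≤ N) (hE : Even N) {c f : ℤ → ℂ} {B : ℝ} (hB : 0 ≤ B)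
    (hc : ∀ k ∈ idxs N, ‖c k‖ ≤ B * ‖dft N f k‖) : l2norm N (idft N c) ≤ B * l2norm N f := by
  have hNr : (0 : ℝ) < N := by exact_mod_cast (by omega : 0 < N)
  have hle : ∑ k ∈ idxs N, ‖c k‖ ^ 2 ≤ B ^ 2 * ∑ k ∈ idxs N, ‖dft N f k‖ ^ 2 := by
    rw [Finset.mul_sum]
    refine Finset.sum_le_sum fun k hk => ?_
    rw [← mul_pow]
    exact pow_le_pow_left₀ (norm_nonneg _) (hc k hk) 2
  unfold l2norm
  rw [← Real.sqrt_sq hB, ← Real.sqrt_mul (sq_nonneg B)]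
  refine Real.sqrt_le_sqrt ?_
  rw [sum_norm_sq_idft hN hE, ← sum_norm_sq_dft hN hE f]
  calc hgrid N * (N * ∑ k ∈ idxs N, ‖c k‖ ^ 2)
      ≤ hgrid N * (N * (B ^ 2 * ∑ k ∈ idxs N, ‖dft N f k‖ ^ 2)) := by
        have := hgrid_pos hN
        gcongr
    _ = _ := by ring

/-- A Fourier multiplier with periodic symbol shifts its symbol when it passes an exponential. -/
lemma idft_mul_dft_mode_mul {N : ℤ} (hN : 2 ≤ N) (hE : Even N) {m : ℤ → ℂ}
    (hm : Function.Periodic m N) (d : ℤ) (φ : ℤ → ℂ) (i : ℤ) :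
    idft N (fun k => m k * dft N (fun j => mode N (d * j) * φ j) k) i
      = mode N (d * i) * idft N (fun k => m (k + d) * dft N φ k) i := by
  have hN0 : N ≠ 0 := by omega
  have hdft : ∀ k, dft N (fun j => mode N (d * j) * φ j) (k + d) = dft N φ k := fun k => by
    rw [dft_eq_sum_mode, dft_eq_sum_mode]
    congr 1
    refine Finset.sum_congr rfl fun j _ => ?_
    rw [show -(k * j) = d * j + -((k + d) * j) by ring, mode_add]
    ring
  have hdper : ∀ ψ : ℤ → ℂ, Function.Periodic (dft N ψ) N := fun ψ k => by
    rw [dft_eq_sum_mode, dft_eq_sum_mode]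
    congr 1
    refine Finset.sum_congr rfl fun j _ => ?_
    rw [show -((k + N) * j) = -(k * j) + (-j) * N by ring, mode_add, mode_mul_period hN0, mul_one]
  rw [idft_eq_sum_mode, idft_eq_sum_mode, ← sum_idxs_add hN hE _ d, Finset.mul_sum]
  · refine Finset.sum_congr rfl fun k _ => ?_
    rw [hdft, add_mul, mode_add]
    ring
  · intro k
    simp only
    rw [hm k, hdper _ k, add_mul, mode_add, mul_comm N i, mode_mul_period hN0, mul_one]

lemma dft_sum_mul {N : ℤ} (s : Finset ℤ) (a : ℤ → ℂ) (g : ℤ → ℤ → ℂ) (k : ℤ) :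
    dft N (fun j => ∑ d ∈ s, a d * g d j) k = ∑ d ∈ s, a d * dft N (g d) k := by
  simp only [dft_eq_sum_mode, Finset.mul_sum, Finset.sum_mul]
  rw [Finset.sum_comm]
  refine Finset.sum_congr rfl fun d _ => Finset.sum_congr rfl fun j _ => ?_
  ring

/-- The representative of `k` modulo `N` in `{-N/2+1, …, N/2}`. -/
def idxRep (N k : ℤ) : ℤ := (k + (N / 2 - 1)) % N - (N / 2 - 1)

lemma idxRep_periodic (N : ℤ) : Function.Periodic (idxRep N) N := fun k => by
  unfold idxRep
  rw [show k + N + (N / 2 - 1) = k + (N / 2 - 1) + N by ring, Int.add_emod_right]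

lemma idxRep_of_mem {N k : ℤ} (hE : Even N) (hk : k ∈ idxs N) : idxRep N k = k := by
  have hN2 := Int.even_iff.1 hE
  simp only [idxs, Finset.mem_Icc] at hk
  unfold idxRep
  rw [Int.emod_eq_of_lt (by omega) (by omega)]
  ring

lemma idxRep_mem {N : ℤ} (hN : 2 ≤ N) (hE : Even N) (k : ℤ) : idxRep N k ∈ idxs N := by
  have hN2 := Int.even_iff.1 hE
  have h1 := Int.emod_nonneg (k + (N / 2 - 1)) (by omega : N ≠ 0)
  have h2 := Int.emod_lt_of_pos (k + (N / 2 - 1)) (by omega : 0 < N)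
  simp only [idxs, Finset.mem_Icc, idxRep]
  omega

lemma idxRep_add_one {N : ℤ} (hN : 2 ≤ N) (hE : Even N) (k : ℤ) :
    idxRep N (k + 1) = idxRep N k + 1 ∨ (idxRep N k = N / 2 ∧ idxRep N (k + 1) = -(N / 2) + 1) := by
  have hN2 := Int.even_iff.1 hE
  have h1 := Int.emod_nonneg (k + (N / 2 - 1)) (by omega : N ≠ 0)
  have h2 := Int.emod_lt_of_pos (k + (N / 2 - 1)) (by omega : 0 < N)
  have h3 := Int.emod_nonneg (k + 1 + (N / 2 - 1)) (by omega : N ≠ 0)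
  have h4 := Int.emod_lt_of_pos (k + 1 + (N / 2 - 1)) (by omega : 0 < N)
  have hadd : (k + 1 + (N / 2 - 1)) % N = ((k + (N / 2 - 1)) % N + 1) % N := by
    rw [Int.emod_add_emod]; congr 1; ring
  unfold idxRep
  rcases lt_or_ge ((k + (N / 2 - 1)) % N + 1) N with h | h
  · left
    rw [hadd, Int.emod_eq_of_lt (by omega) h]
    ring
  · right
    have hN' : (k + (N / 2 - 1)) % N + 1 = N := by omega
    rw [hadd, hN', Int.emod_self]
    omega

/-- The periodized filter symbol varies by `O(h)` from one frequency to the next. -/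
lemma abs_filter_idxRep_sub_le {ρ : ℝ → ℝ} (h0 : ρ Real.pi = 0) (h0' : ρ (-Real.pi) = 0)
    {L : ℝ} (hL : ∀ x ∈ Set.Icc (-Real.pi) Real.pi, ∀ y ∈ Set.Icc (-Real.pi) Real.pi,
      |ρ x - ρ y| ≤ L * |x - y|) {N : ℤ} (hN : 2 ≤ N) (hE : Even N) (k d : ℤ) :
    |ρ (gridPt N (idxRep N (k + d))) - ρ (gridPt N (idxRep N k))| ≤ L * hgrid N * |(d : ℝ)| := by
  have hN2 := Int.even_iff.1 hE
  have hh := hgrid_pos hN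
  have hNr : (N : ℝ) ≠ 0 := by exact_mod_cast (by omega : N ≠ 0)
  have hadj : ∀ l : ℤ, |l| ≤ N / 2 → |l + 1| ≤ N / 2 →
      |ρ (gridPt N (l + 1)) - ρ (gridPt N l)| ≤ L * hgrid N := fun l hl hl' => by
    refine (hL _ (gridPt_mem_Icc hN hl') _ (gridPt_mem_Icc hN hl)).trans_eq ?_
    rw [show gridPt N (l + 1) - gridPt N l = hgrid N by simp only [gridPt]; push_cast; ring,
      abs_of_pos hh]
  have hhalf : gridPt N (N / 2) = Real.pi := by
    have : ((N / 2 : ℤ) : ℝ) = N / 2 := by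
      rw [eq_div_iff two_ne_zero]; exact_mod_cast (by omega : N / 2 * 2 = N)
    rw [gridPt, this, hgrid]
    field_simp
  have hhalf' : gridPt N (-(N / 2)) = -Real.pi := by
    rw [← hhalf, gridPt, gridPt]; push_cast; ring
  have hstep : ∀ l : ℤ,
      |ρ (gridPt N (idxRep N (l + 1))) - ρ (gridPt N (idxRep N l))| ≤ L * hgrid N := fun l => by
    have hm := abs_le_of_mem_idxs (idxRep_mem hN hE l)
    have hm' := abs_le_of_mem_idxs (idxRep_mem hN hE (l + 1))
    rcases idxRep_add_one hN hE l with h | ⟨h, h'⟩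
    · rw [h] at hm' ⊢
      exact hadj _ hm hm'
    · have := hadj (-(N / 2)) (by rw [abs_le]; omega) (by rw [abs_le]; omega)
      rw [hhalf', h0'] at this
      rwa [h, h', hhalf, h0]
  have hnat : ∀ (l : ℤ) (n : ℕ),
      |ρ (gridPt N (idxRep N (l + n))) - ρ (gridPt N (idxRep N l))| ≤ L * hgrid N * n := by
    intro l n
    induction n with
    | zero => simp
    | succ n ih =>
      have := hstep (l + n)
      push_cast
      rw [← add_assoc]
      calc _ ≤ _ := abs_sub_le _ (ρ (gridPt N (idxRep N (l + n)))) _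
        _ ≤ _ := by linarith
  rcases le_total 0 d with hd | hd
  · lift d to ℕ using hd
    simpa using hnat k d
  · obtain ⟨n, rfl⟩ : ∃ n : ℕ, d = -n := ⟨(-d).toNat, by omega⟩
    have := hnat (k + -n) n
    rw [neg_add_cancel_right, abs_sub_comm] at this
    simpa using this

/-- The commutator of the filter with multiplication by `f` is `O(h)`, provided the discrete
Fourier coefficients of `f` have a finite first moment. -/
lemma l2norm_Ghp_le {ρ : ℝ → ℝ} (h0 : ρ Real.pi = 0) (h0' : ρ (-Real.pi) = 0)
    {L : ℝ} (hL0 : 0 ≤ L)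
    (hL : ∀ x ∈ Set.Icc (-Real.pi) Real.pi, ∀ y ∈ Set.Icc (-Real.pi) Real.pi,
      |ρ x - ρ y| ≤ L * |x - y|) {N : ℤ} (hN : 2 ≤ N) (hE : Even N) (f : ℝ → ℂ) {A : ℝ}
    (hA : ∑ d ∈ idxs N, |(d : ℝ)| * ‖dft N (samples N f) d‖ ≤ A) (φ : ℤ → ℂ) :
    l2norm N (Ghp N ρ f φ) ≤ A * L * hgrid N * l2norm N φ := by
  set a : ℤ → ℂ := dft N (samples N f) with ha
  set m : ℤ → ℂ := fun k => (ρ (gridPt N (idxRep N k)) : ℂ) with hm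
  have hmper : Function.Periodic m N := fun k => by simp only [hm, idxRep_periodic N k]
  have hfexp : ∀ j ∈ idxs N, f (gridPt N j) = ∑ d ∈ idxs N, a d * mode N (d * j) := fun j hj => by
    rw [← idft_eq_sum_mode, ha, idft_dft hN hE _ hj, samples]
  have hfilter : ∀ ψ i, filterP N ρ ψ i = idft N (fun k => m k * dft N ψ k) i := fun ψ i => by
    simp only [filterP, idft, hm]
    refine Finset.sum_congr rfl fun k hk => ?_
    rw [idxRep_of_mem hE hk]
  have hG : ∀ i ∈ idxs N, Ghp N ρ f φ i = ∑ d ∈ idxs N, (a d * mode N (d * i)) *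
      idft N (fun k => (m (k + d) - m k) * dft N φ k) i := fun i hi => by
    have hprod : ∀ k, dft N (fun j => f (gridPt N j) * φ j) k
        = ∑ d ∈ idxs N, a d * dft N (fun j => mode N (d * j) * φ j) k := fun k => by
      rw [← dft_sum_mul, dft, dft]
      congr 1
      refine Finset.sum_congr rfl fun j hj => ?_
      simp only [hfexp j hj, Finset.sum_mul, mul_assoc]
    have hlin : idft N (fun k => m k * dft N (fun j => f (gridPt N j) * φ j) k) i
        = ∑ d ∈ idxs N, a d * idft N (fun k => m k * dft N (fun j => mode N (d * j) * φ j) k) i := by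
      simp only [hprod, idft_eq_sum_mode, Finset.mul_sum, Finset.sum_mul]
      rw [Finset.sum_comm]
      refine Finset.sum_congr rfl fun d _ => Finset.sum_congr rfl fun k _ => ?_
      ring
    rw [Ghp, hfilter, hfilter, hlin, hfexp i hi, Finset.sum_mul, ← Finset.sum_sub_distrib]
    refine Finset.sum_congr rfl fun d _ => ?_
    rw [idft_mul_dft_mode_mul hN hE hmper, ← mul_assoc, ← mul_sub]
    congr 1
    simp only [idft_eq_sum_mode, ← Finset.sum_sub_distrib, sub_mul]
  rw [l2norm_congr hG]
  have hh := hgrid_pos hN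
  calc _ ≤ _ := l2norm_sum_le hN (idxs N) _
    _ ≤ ∑ d ∈ idxs N, ‖a d‖ * (L * hgrid N * |(d : ℝ)| * l2norm N φ) := by
      refine Finset.sum_le_sum fun d _ => ?_
      rw [l2norm_mul_of_norm_eq (norm_nonneg (a d)) fun j => by
        rw [norm_mul, norm_mode, mul_one]]
      refine mul_le_mul_of_nonneg_left (l2norm_idft_le hN hE (by positivity) fun k _ => ?_)
        (norm_nonneg _)
      rw [norm_mul]
      refine mul_le_mul_of_nonneg_right ?_ (norm_nonneg _)
      rw [hm, ← Complex.ofReal_sub, Complex.norm_real]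
      exact abs_filter_idxRep_sub_le h0 h0' hL hN hE k d
    _ = (∑ d ∈ idxs N, |(d : ℝ)| * ‖a d‖) * (L * hgrid N * l2norm N φ) := by
      rw [Finset.sum_mul]
      exact Finset.sum_congr rfl fun d _ => by ring
    _ ≤ A * (L * hgrid N * l2norm N φ) := by
      have := l2norm_nonneg N φ
      gcongr
    _ = _ := by ring

lemma exists_norm_second_difference_le {f : ℝ → ℂ} {T : ℝ} (hT : T ≠ 0)
    (hper : Function.Periodic f T) (hf : ContDiff ℝ 2 f) :
    ∃ C : ℝ, 0 ≤ C ∧ ∀ x t : ℝ, ‖f (x + t) - 2 * f x + f (x - t)‖ ≤ C * t ^ 2 := by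
  have hderivper : ∀ g : ℝ → ℂ, Function.Periodic g T → Function.Periodic (deriv g) T :=
    fun g hg x => by
      rw [← deriv_comp_add_const, show (fun y => g (y + T)) = g from funext hg]
  have hf1 : ContDiff ℝ 1 (deriv f) := hf.iterate_deriv' 1 1
  have hf2 : Continuous (deriv (deriv f)) := hf1.continuous_deriv le_rfl
  obtain ⟨C, hC⟩ := isBounded_iff_forall_norm_le.1
    ((hderivper _ (hderivper _ hper)).isBounded_of_continuous hT hf2)
  have hC' : ∀ x, ‖deriv (deriv f) x‖ ≤ C := fun x => hC _ ⟨x, rfl⟩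
  have hfd : Differentiable ℝ f := hf.differentiable two_ne_zero
  have hfd1 : Differentiable ℝ (deriv f) := hf1.differentiable one_ne_zero
  refine ⟨C, (norm_nonneg _).trans (hC' 0), fun x t => ?_⟩
  have hlip : ∀ y, ‖deriv f (y + t) - deriv f y‖ ≤ C * ‖t‖ := fun y => by
    simpa using convex_univ.norm_image_sub_le_of_norm_deriv_le (fun z _ => hfd1 z)
      (fun z _ => hC' z) (Set.mem_univ y) (Set.mem_univ (y + t))
  have hg : ∀ y, HasDerivAt (fun y => f (y + t) - f y) (deriv f (y + t) - deriv f y) y := fun y =>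
    ((hfd (y + t)).hasDerivAt.comp_add_const y t).sub (hfd y).hasDerivAt
  have := convex_univ.norm_image_sub_le_of_norm_hasDerivWithin_le
    (fun z _ => (hg z).hasDerivWithinAt) (fun z _ => hlip z) (Set.mem_univ (x - t))
    (Set.mem_univ x)
  calc _ = ‖f (x + t) - f x - (f (x - t + t) - f (x - t))‖ := by
        rw [sub_add_cancel]; congr 1; ring
    _ ≤ C * ‖t‖ * ‖x - (x - t)‖ := this
    _ = C * t ^ 2 := by
        rw [sub_sub_cancel, mul_assoc, Real.norm_eq_abs, ← sq, sq_abs]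

/-- Discrete Fourier coefficients of a second difference. -/
lemma norm_dft_second_difference {N : ℤ} (hN : 2 ≤ N) (hE : Even N) {F : ℤ → ℂ}
    (hF : Function.Periodic F N) (k : ℤ) :
    ‖dft N (fun j => F (j + 1) - 2 * F j + F (j - 1)) k‖
      = 4 * Real.sin (k * hgrid N / 2) ^ 2 * ‖dft N F k‖ := by
  have hN0 : N ≠ 0 := by omega
  have hshift : ∀ e : ℤ, ∑ j ∈ idxs N, F (j + e) * mode N (-(k * j))
      = mode N (k * e) * ∑ j ∈ idxs N, F j * mode N (-(k * j)) := fun e => by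
    rw [← sum_idxs_add hN hE (g := fun j => F j * mode N (-(k * j))) _ e, Finset.mul_sum]
    · refine Finset.sum_congr rfl fun j _ => ?_
      rw [show -(k * j) = k * e + -(k * (j + e)) by ring, mode_add]
      ring
    · intro j
      simp only
      rw [hF j, show -(k * (j + N)) = -(k * j) + (-k) * N by ring, mode_add, mode_mul_period hN0,
        mul_one]
  have hmode : mode N k - 2 + mode N (-k)
      = ((-(4 * Real.sin (k * hgrid N / 2) ^ 2) : ℝ) : ℂ) := by
    have h1 : mode N k + mode N (-k) = 2 * Complex.cos (k * hgrid N) := by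
      rw [Complex.two_cos, mode, mode]
      congr 2 <;> push_cast <;> ring
    have h2 : Real.cos (k * hgrid N) = 1 - 2 * Real.sin (k * hgrid N / 2) ^ 2 := by
      have := Real.cos_two_mul (k * hgrid N / 2)
      rw [mul_div_cancel₀ _ (two_ne_zero' ℝ)] at this
      rw [this, Real.cos_sq']; ring
    have h3 : Complex.cos (k * hgrid N) = ((Real.cos (k * hgrid N) : ℝ) : ℂ) := by push_cast; rfl
    rw [sub_add_eq_add_sub, h1, h3, h2]
    push_cast; ring
  have hdft : dft N (fun j => F (j + 1) - 2 * F j + F (j - 1)) k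
      = (mode N k - 2 + mode N (-k)) * dft N F k := by
    have hp := hshift 1
    have hm := hshift (-1)
    rw [mul_one] at hp
    rw [mul_neg_one] at hm
    rw [dft_eq_sum_mode, dft_eq_sum_mode]
    simp only [add_mul, sub_mul, Finset.sum_add_distrib, Finset.sum_sub_distrib, mul_assoc,
      ← Finset.mul_sum, sub_eq_add_neg (_ : ℤ) 1]
    rw [hp, hm]
    ring
  rw [hdft, hmode, norm_mul, Complex.norm_real, norm_neg, Real.norm_of_nonneg (by positivity)]

lemma exists_sum_abs_mul_norm_dft_samples_le {f : ℝ → ℂ}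
    (hper : Function.Periodic f (2 * Real.pi)) (hf : ContDiff ℝ 2 f) :
    ∃ A : ℝ, 0 ≤ A ∧ ∀ N : ℤ, 2 ≤ N → Even N →
      ∑ d ∈ idxs N, |(d : ℝ)| * ‖dft N (samples N f) d‖ ≤ A := by
  obtain ⟨C, hC0, hC⟩ := exists_norm_second_difference_le (by positivity) hper hf
  have hsum : Summable fun d : ℤ => 1 / (d : ℝ) ^ 2 := Real.summable_one_div_int_pow.2 one_lt_two
  set Z := ∑' d : ℤ, 1 / (d : ℝ) ^ 2 with hZ
  have hZ0 : 0 ≤ Z := tsum_nonneg fun d => by positivity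
  refine ⟨Z + (C * Real.pi ^ 2 / 4) ^ 2, by positivity, fun N hN hE => ?_⟩
  have hNr : (0 : ℝ) < N := by exact_mod_cast (by omega : 0 < N)
  have hh := hgrid_pos hN
  have hpi := Real.pi_pos
  set F := samples N f with hFdef
  have hF : Function.Periodic F N := fun j => by
    simp only [hFdef, samples]
    rw [← hper (gridPt N j)]
    congr 1
    simp only [gridPt, hgrid]
    push_cast
    field_simp
  set Δ : ℤ → ℂ := fun j => F (j + 1) - 2 * F j + F (j - 1) with hΔ
  have hΔle : ∀ j, ‖Δ j‖ ≤ C * hgrid N ^ 2 := fun j => by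
    have h1 : gridPt N (j + 1) = gridPt N j + hgrid N := by simp only [gridPt]; push_cast; ring
    have h2 : gridPt N (j - 1) = gridPt N j - hgrid N := by simp only [gridPt]; push_cast; ring
    simp only [hΔ, hFdef, samples, h1, h2]
    exact hC _ _
  have hcard : ((idxs N).card : ℝ) = N := by
    have := Int.even_iff.1 hE
    rw [idxs, Int.card_Icc, show (N / 2 + 1 - (-(N / 2) + 1)).toNat = N.toNat by omega]
    exact_mod_cast Int.toNat_of_nonneg (by omega : (0 : ℤ) ≤ N)
  have hΔsum : ∑ d ∈ idxs N, ‖dft N Δ d‖ ^ 2 ≤ (C * hgrid N ^ 2) ^ 2 := by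
    have hp := sum_norm_sq_dft hN hE Δ
    have hle : ∑ j ∈ idxs N, ‖Δ j‖ ^ 2 ≤ N * (C * hgrid N ^ 2) ^ 2 := by
      rw [← hcard, ← nsmul_eq_mul]
      exact Finset.sum_le_card_nsmul _ _ _ fun j _ =>
        pow_le_pow_left₀ (norm_nonneg _) (hΔle j) 2
    rw [← hp] at hle
    exact le_of_mul_le_mul_left hle hNr
  have hcoef : ∀ d ∈ idxs N,
      (d : ℝ) ^ 2 * ‖dft N F d‖ ≤ Real.pi ^ 2 / (4 * hgrid N ^ 2) * ‖dft N Δ d‖ := fun d hd => by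
    have hsmall : |(d : ℝ) * hgrid N / 2| ≤ Real.pi / 2 := by
      rw [abs_div, abs_mul, abs_of_pos hh, abs_two]
      have := abs_mul_hgrid_le hN (abs_le_of_mem_idxs hd)
      linarith
    have hsin := pow_le_pow_left₀ (by positivity) (Real.mul_abs_le_abs_sin hsmall) 2
    rw [sq_abs, mul_pow, sq_abs] at hsin
    rw [hΔ, norm_dft_second_difference hN hE hF]
    calc (d : ℝ) ^ 2 * ‖dft N F d‖
        = Real.pi ^ 2 / (4 * hgrid N ^ 2) *
          (4 * ((2 / Real.pi) ^ 2 * (d * hgrid N / 2) ^ 2) * ‖dft N F d‖) := by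
          field_simp
      _ ≤ _ := by gcongr
  have hterm : ∀ d ∈ idxs N, |(d : ℝ)| * ‖dft N F d‖ ≤ 1 / (d : ℝ) ^ 2 +
      (Real.pi ^ 2 / (4 * hgrid N ^ 2)) ^ 2 * ‖dft N Δ d‖ ^ 2 := fun d hd => by
    rcases eq_or_ne d 0 with rfl | hd0
    · simp; positivity
    · have hdr : (0 : ℝ) < |(d : ℝ)| := abs_pos.2 (by exact_mod_cast hd0)
      have hsq := pow_le_pow_left₀ (by positivity) (hcoef d hd) 2
      rw [mul_pow (Real.pi ^ 2 / _)] at hsq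
      refine le_trans ?_ (add_le_add le_rfl hsq)
      rw [← sq_abs (d : ℝ)]
      have hprod : |(d : ℝ)| * ‖dft N F d‖ = |(d : ℝ)|⁻¹ * (|(d : ℝ)| ^ 2 * ‖dft N F d‖) := by
        field_simp
      rw [hprod, one_div, ← inv_pow]
      nlinarith [sq_nonneg (|(d : ℝ)|⁻¹ - |(d : ℝ)| ^ 2 * ‖dft N F d‖),
        sq_nonneg (|(d : ℝ)|⁻¹), sq_nonneg (|(d : ℝ)| ^ 2 * ‖dft N F d‖)]
  calc _ ≤ _ := Finset.sum_le_sum hterm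
    _ = ∑ d ∈ idxs N, 1 / (d : ℝ) ^ 2 +
        (Real.pi ^ 2 / (4 * hgrid N ^ 2)) ^ 2 * ∑ d ∈ idxs N, ‖dft N Δ d‖ ^ 2 := by
      rw [Finset.sum_add_distrib, Finset.mul_sum]
    _ ≤ Z + (Real.pi ^ 2 / (4 * hgrid N ^ 2)) ^ 2 * (C * hgrid N ^ 2) ^ 2 := by
      gcongr
      exact hsum.sum_le_tsum _ fun d _ => by positivity
    _ = _ := by field_simp

lemma exists_filter_bounds {ρ : ℝ → ℝ} (hρ : ContDiff ℝ 1 ρ) (a b : ℝ) :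
    ∃ L : ℝ, 0 ≤ L ∧ (∀ x ∈ Set.Icc a b, |ρ x| ≤ L) ∧
      ∀ x ∈ Set.Icc a b, ∀ y ∈ Set.Icc a b, |ρ x - ρ y| ≤ L * |x - y| := by
  obtain ⟨R, hR⟩ := isCompact_Icc.exists_bound_of_continuousOn
    (hρ.continuous.continuousOn (s := Set.Icc a b))
  obtain ⟨K, hK⟩ := isCompact_Icc.exists_bound_of_continuousOn
    ((hρ.continuous_deriv le_rfl).continuousOn (s := Set.Icc a b))
  refine ⟨max 0 (max R K), le_max_left _ _, fun x hx => (hR x hx).trans (by simp),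
    fun x hx y hy => ?_⟩
  exact (convex_Icc a b).norm_image_sub_le_of_norm_deriv_le
    (fun z _ => hρ.differentiable one_ne_zero z)
    (fun z hz => (hK z hz).trans (by simp)) hy hx

lemma l2norm_Sh_le {N : ℤ} (hN : 2 ≤ N) (hE : Even N) (φ : ℤ → ℂ) :
    hgrid N * l2norm N (Sh N φ) ≤ Real.pi * l2norm N φ := by
  have hh := hgrid_pos hN
  have hpi := Real.pi_pos
  rw [← le_div_iff₀' hh, mul_div_right_comm]
  refine l2norm_idft_le hN hE (by positivity) fun k hk => ?_
  split_ifs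
  · rw [norm_zero]; positivity
  · rw [norm_mul, norm_mul, Complex.norm_I, one_mul, Complex.norm_intCast]
    refine mul_le_mul_of_nonneg_right ?_ (norm_nonneg _)
    rw [le_div_iff₀ hh]
    exact abs_mul_hgrid_le hN (abs_le_of_mem_idxs hk)

lemma l2norm_Dh_le {ρ : ℝ → ℝ} {R : ℝ} (hR0 : 0 ≤ R)
    (hR : ∀ x ∈ Set.Icc (-Real.pi) Real.pi, |ρ x| ≤ R)
    {N : ℤ} (hN : 2 ≤ N) (hE : Even N) (φ : ℤ → ℂ) :
    hgrid N * l2norm N (Dh N ρ φ) ≤ Real.pi * R * l2norm N φ := by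
  have hh := hgrid_pos hN
  have hpi := Real.pi_pos
  rw [← le_div_iff₀' hh, mul_div_right_comm]
  refine l2norm_idft_le hN hE (by positivity) fun k hk => ?_
  have hk' := abs_le_of_mem_idxs hk
  rw [norm_mul, norm_mul, norm_mul, Complex.norm_I, one_mul, Complex.norm_intCast,
    Complex.norm_real]
  refine mul_le_mul_of_nonneg_right ?_ (norm_nonneg _)
  rw [le_div_iff₀ hh, mul_right_comm]
  exact mul_le_mul (abs_mul_hgrid_le hN hk') (hR _ (gridPt_mem_Icc hN hk')) (abs_nonneg _) hpi.le

/-- Lemma 8.5: the commutator of filtering with multiplication by a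
smooth function is a first-order smoothing operator `A_{-1}`. -/
theorem filter_commutator_smoothing (f : ℝ → ℂ)
    (hper : Function.Periodic f (2 * Real.pi)) (hf : ContDiff ℝ 2 f)
    (ρ : ℝ → ℝ) (hρ : IsFilter ρ) :
    ∃ c : ℝ, 0 < c ∧ ∀ N : ℤ, 2 ≤ N → Even N → ∀ φ : ℤ → ℂ, ∀ k : ℕ, k ≤ 1 →
      l2norm N ((Dh N ρ)^[k] (Ghp N ρ f φ)) ≤ c * l2norm N φ ∧
      l2norm N (Ghp N ρ f ((Sh N)^[k] φ)) ≤ c * l2norm N φ := by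
  obtain ⟨r, hr, hρr⟩ := hρ.smooth
  obtain ⟨L, hL0, hR, hL⟩ := exists_filter_bounds
    (hρr.of_le (by exact_mod_cast (by omega : 1 ≤ r))) (-Real.pi) Real.pi
  obtain ⟨A, hA0, hA⟩ := exists_sum_abs_mul_norm_dft_samples_le hper hf
  have hpi := Real.pi_pos
  refine ⟨A * L * Real.pi * (1 + L) + 1, by positivity, fun N hN hE φ k hk => ?_⟩
  have hh := hgrid_pos hN
  have hh' : hgrid N ≤ Real.pi := by
    simpa using abs_mul_hgrid_le hN (k := 1) (by rw [abs_one]; omega)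
  have hG := fun ψ => l2norm_Ghp_le hρ.zero_at_pi hρ.zero_at_neg_pi hL0 hL hN hE f (hA N hN hE) ψ
  have hφ := l2norm_nonneg N φ
  have hweak : A * L * Real.pi * l2norm N φ
      ≤ (A * L * Real.pi * (1 + L) + 1) * l2norm N φ := by
    gcongr
    nlinarith [mul_nonneg (mul_nonneg (mul_nonneg hA0 hL0) hpi.le) hL0]
  interval_cases k
  · have h : l2norm N (Ghp N ρ f φ) ≤ (A * L * Real.pi * (1 + L) + 1) * l2norm N φ :=
      ((hG φ).trans (by gcongr)).trans hweak
    exact ⟨h, h⟩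
  · simp only [Function.iterate_one]
    constructor
    · refine le_of_mul_le_mul_left ?_ hh
      calc _ ≤ _ := l2norm_Dh_le hL0 hR hN hE _
        _ ≤ Real.pi * L * (A * L * hgrid N * l2norm N φ) := by gcongr; exact hG φ
        _ = hgrid N * (A * L * Real.pi * L * l2norm N φ) := by ring
        _ ≤ _ := by
          gcongr
          nlinarith [mul_nonneg (mul_nonneg hA0 hL0) hpi.le]
    · calc _ ≤ _ := hG (Sh N φ)
        _ = A * L * (hgrid N * l2norm N (Sh N φ)) := by ring
        _ ≤ A * L * (Real.pi * l2norm N φ) := by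
          exact mul_le_mul_of_nonneg_left (l2norm_Sh_le hN hE φ) (mul_nonneg hA0 hL0)
        _ = A * L * Real.pi * l2norm N φ := by ring
        _ ≤ _ := hweak

end
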